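/- arXiv:1610.05763 — 4 statements merged into one kernel-verified Lean document; each statement's English description precedes it below -/
import Mathlib

section
/- Let S be an r×r Fourier matrix with character table P, and assume that entrywise complex conjugation permutes the columns of P via an involution i ↦ i* (conj(p_{li}) = p_{l,i*} for all l, i). Suppose the structure constants satisfy λ_{i,i*,j} ≥ 0 for all i, j. Then the set L of columns of P whose degree equals 1 (i.e., columns p_{·j} with k_j = 1) is an abelian group under componentwise multiplication: the all-ones column p_{·0} belongs to L and is the identity, L is closed under componentwise product and under entrywise complex conjugation, and for every column b ∈ L the componentwise product of b with its entrywise conjugate equals p_{·0}. -/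
open Complex Matrix BigOperators

namespace FourierPaper

noncomputable section

/-- A Fourier matrix: symmetric, unitary, positive real 0-th column,
integral structure constants `N_{ijk}`. -/
structure IsFourier {r : ℕ} [NeZero r] (S : Matrix (Fin r) (Fin r) ℂ) : Prop where
  symm : ∀ i j, S i j = S j i
  unitary : S * S.conjTranspose = 1
  col0_real : ∀ i, (S i 0).im = 0
  col0_pos : ∀ i, 0 < (S i 0).re
  structInt : ∀ i j k : Fin r, ∃ z : ℤ,
    (∑ l, S l i * S l j * (starRingEnd ℂ) (S l k) / S l 0) = (z : ℂ)

/-- The Allen matrix of `S`: `s i j = S i j / S i 0`. -/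
def allen {r : ℕ} [NeZero r] (S : Matrix (Fin r) (Fin r) ℂ) : Matrix (Fin r) (Fin r) ℂ :=
  fun i j => S i j / S i 0

/-- The character table (first eigenmatrix): `p i j = s i j * s 0 j`. -/
def charTable {r : ℕ} [NeZero r] (S : Matrix (Fin r) (Fin r) ℂ) : Matrix (Fin r) (Fin r) ℂ :=
  fun i j => allen S i j * allen S 0 j

/-- The norm `d_i = ∑_j |s i j|²`. -/
def nrm {r : ℕ} [NeZero r] (S : Matrix (Fin r) (Fin r) ℂ) (i : Fin r) : ℝ :=
  ∑ j, Complex.normSq (allen S i j)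

/-- The degree `k_j = s_{0j}²` (a positive real, as `s 0 j` is a positive real). -/
def deg {r : ℕ} [NeZero r] (S : Matrix (Fin r) (Fin r) ℂ) (j : Fin r) : ℝ :=
  ((allen S 0 j).re) ^ 2

/-- The structure constant `N_{ijk}`. -/
def Nstruct {r : ℕ} [NeZero r] (S : Matrix (Fin r) (Fin r) ℂ) (i j k : Fin r) : ℂ :=
  ∑ l, S l i * S l j * (starRingEnd ℂ) (S l k) / S l 0

/-- The structure constant `λ_{ijk}` of the character-table basis. -/
def lam {r : ℕ} [NeZero r] (S : Matrix (Fin r) (Fin r) ℂ) (i j k : Fin r) : ℂ :=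
  Nstruct S i j k * allen S 0 i * allen S 0 j / allen S 0 k

/-- `S` has all real entries. -/
def RealMatrix {r : ℕ} (S : Matrix (Fin r) (Fin r) ℂ) : Prop :=
  ∀ i j, (S i j).im = 0

/-- Integrality hypothesis: every norm `d_i` is a positive integer dividing `d_0`. -/
def IntegralityHyp {r : ℕ} [NeZero r] (S : Matrix (Fin r) (Fin r) ℂ) : Prop :=
  ∃ D : Fin r → ℕ, (∀ i, 0 < D i) ∧ (∀ i, nrm S i = (D i : ℝ)) ∧ (∀ i, D i ∣ D 0)

/-- The set `L` of columns of the character table whose degree equals `1`. -/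
def Lset {r : ℕ} [NeZero r] (S : Matrix (Fin r) (Fin r) ℂ) : Set (Fin r → ℂ) :=
  {b | ∃ j : Fin r, deg S j = 1 ∧ ∀ l, b l = charTable S l j}

/-!
For a degree-one column `i`, expand `s_{0i} s_{0i*} = 1` in the fusion coefficients:
`∑ k, N_{i i* k} s_{0k} = 1`. The term `k = 0` is already `1` and all terms are nonnegative, so
`N_{i i*}` is the indicator of `0`, that is, `|s_{li}| = 1` for all `l`.

Given unimodular columns `i` and `j`, the vector `s_{li} s_{lj} S_{l0}` has the same length `1`
as the column `S_{l0}`. It is the image of the integer vector `N_{ij}` under the unitary matrix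
`S`, so `N_{ij}` is plus or minus a standard basis vector; positivity of row `0` of `s` excludes
the minus sign.
-/

section General

variable {𝕜 n : Type*} [RCLike 𝕜] [Fintype n] [DecidableEq n]

theorem sum_norm_sq_mulVec {U : Matrix n n 𝕜} (hU : U ∈ unitaryGroup n 𝕜) (v : n → 𝕜) :
    ∑ i, ‖(U *ᵥ v) i‖ ^ 2 = ∑ i, ‖v i‖ ^ 2 := by
  have h : star (U *ᵥ v) ⬝ᵥ (U *ᵥ v) = star v ⬝ᵥ v := by
    rw [star_mulVec, dotProduct_mulVec, vecMul_vecMul, ← star_eq_conjTranspose,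
      mem_unitaryGroup_iff'.1 hU, vecMul_one]
  simpa only [dotProduct, Pi.star_apply, RCLike.star_def, RCLike.conj_mul, ← RCLike.ofReal_pow,
    ← RCLike.ofReal_sum, RCLike.ofReal_inj] using h

theorem sum_norm_sq_col {U : Matrix n n 𝕜} (hU : U ∈ unitaryGroup n 𝕜) (j : n) :
    ∑ i, ‖U i j‖ ^ 2 = 1 := by
  simpa [Pi.single_apply, apply_ite] using sum_norm_sq_mulVec hU (Pi.single j 1)

theorem exists_eq_single_of_sum_sq_eq_one {z : n → ℤ} (h : ∑ i, z i ^ 2 = 1) :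
    ∃ k, z = Pi.single k 1 ∨ z = Pi.single k (-1) := by
  obtain ⟨k, -, hk⟩ : ∃ k ∈ Finset.univ, z k ^ 2 ≠ 0 :=
    Finset.exists_ne_zero_of_sum_ne_zero (h ▸ one_ne_zero)
  have hk_pos : 0 < z k ^ 2 := (sq_nonneg _).lt_of_ne' hk
  have eq_zero {m : n} (hm : m ≠ k) : z m = 0 := by
    have : z m ^ 2 + z k ^ 2 ≤ ∑ i, z i ^ 2 :=
      Finset.add_le_sum (fun i _ ↦ sq_nonneg (z i)) (Finset.mem_univ m) (Finset.mem_univ k) hm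
    exact pow_eq_zero_iff two_ne_zero |>.1 (by linarith [sq_nonneg (z m)])
  have z_eq : z = Pi.single k (z k) := by
    ext m
    obtain rfl | hm := eq_or_ne m k
    · rw [Pi.single_eq_same]
    · rw [Pi.single_eq_of_ne hm, eq_zero hm]
  have sq_eq_one : z k ^ 2 = 1 := by
    rwa [Fintype.sum_eq_single k fun m hm ↦ by rw [eq_zero hm, zero_pow two_ne_zero]] at h
  refine ⟨k, (sq_eq_one_iff.1 sq_eq_one).imp ?_ ?_⟩ <;>
    exact fun hz ↦ hz ▸ z_eq

end General

section Fourier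

variable {r : ℕ} [NeZero r] {S : Matrix (Fin r) (Fin r) ℂ} {i i' j k : Fin r}

theorem charTable_eq_allen (hj : allen S 0 j = 1) (l : Fin r) : charTable S l j = allen S l j := by
  rw [charTable, hj, mul_one]

namespace IsFourier

open scoped ComplexOrder ComplexConjugate

theorem mem_unitaryGroup (hS : IsFourier S) : S ∈ unitaryGroup (Fin r) ℂ :=
  mem_unitaryGroup_iff.2 hS.unitary

theorem col_zero_pos (hS : IsFourier S) (l : Fin r) : 0 < S l 0 :=
  Complex.pos_iff.2 ⟨hS.col0_pos l, (hS.col0_real l).symm⟩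

theorem conj_col_zero (hS : IsFourier S) (l : Fin r) : conj (S l 0) = S l 0 :=
  Complex.conj_eq_iff_im.2 (hS.col0_real l)

theorem allen_mul_col_zero (hS : IsFourier S) (l i : Fin r) : allen S l i * S l 0 = S l i :=
  div_mul_cancel₀ _ (hS.col_zero_pos l).ne'

theorem allen_zero (hS : IsFourier S) (l : Fin r) : allen S l 0 = 1 :=
  div_self (hS.col_zero_pos l).ne'

theorem allen_row_zero_pos (hS : IsFourier S) (j : Fin r) : 0 < allen S 0 j := by
  rw [allen, hS.symm]
  exact div_pos (hS.col_zero_pos j) (hS.col_zero_pos 0)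

theorem deg_eq_one_iff (hS : IsFourier S) : deg S j = 1 ↔ allen S 0 j = 1 := by
  obtain ⟨re_pos, im_eq⟩ := Complex.pos_iff.1 (hS.allen_row_zero_pos j)
  rw [deg, pow_eq_one_iff_of_nonneg re_pos.le two_ne_zero, Complex.ext_iff]
  simp only [one_re, one_im, ← im_eq, and_true]

theorem mem_Lset_iff (hS : IsFourier S) {b : Fin r → ℂ} :
    b ∈ Lset S ↔ ∃ j, allen S 0 j = 1 ∧ b = fun l ↦ allen S l j := by
  simp only [Lset, Set.mem_ofPred_eq, hS.deg_eq_one_iff, funext_iff]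
  refine exists_congr fun j ↦ and_congr_right fun hj ↦ ?_
  simp only [charTable_eq_allen hj]

theorem mulVec_Nstruct (hS : IsFourier S) (i j : Fin r) :
    S *ᵥ Nstruct S i j = fun l ↦ allen S l i * allen S l j * S l 0 := by
  have Nstruct_eq : Nstruct S i j = Sᴴ *ᵥ fun l ↦ allen S l i * allen S l j * S l 0 := by
    ext k
    refine Finset.sum_congr rfl fun l _ ↦ ?_
    simp only [conjTranspose_apply, Complex.star_def, mul_assoc, hS.allen_mul_col_zero]
    rw [allen]
    ring
  rw [Nstruct_eq, mulVec_mulVec, hS.unitary, one_mulVec]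

theorem allen_mul_allen (hS : IsFourier S) (i j l : Fin r) :
    allen S l i * allen S l j = ∑ k, Nstruct S i j k * allen S l k := by
  refine mul_right_cancel₀ (hS.col_zero_pos l).ne' ?_
  calc allen S l i * allen S l j * S l 0 = ∑ k, S l k * Nstruct S i j k :=
        (congrFun (hS.mulVec_Nstruct i j) l).symm
    _ = (∑ k, Nstruct S i j k * allen S l k) * S l 0 := by
        simp only [Finset.sum_mul, mul_assoc, hS.allen_mul_col_zero]
        exact Finset.sum_congr rfl fun k _ ↦ mul_comm _ _

theorem allen_mul_allen_of_Nstruct_eq_single (hS : IsFourier S)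
    (hN : Nstruct S i j = Pi.single k 1) (l : Fin r) :
    allen S l i * allen S l j = allen S l k := by
  rw [hS.allen_mul_allen, hN, ← dotProduct, single_one_dotProduct]

theorem lam_nonneg_iff (hS : IsFourier S) : 0 ≤ lam S i j k ↔ 0 ≤ Nstruct S i j k := by
  have scale_pos : 0 < allen S 0 i * allen S 0 j / allen S 0 k :=
    div_pos (mul_pos (hS.allen_row_zero_pos i) (hS.allen_row_zero_pos j)) (hS.allen_row_zero_pos k)
  rw [lam, mul_assoc, mul_div_assoc]
  refine ⟨fun h ↦ ?_, fun h ↦ mul_nonneg h scale_pos.le⟩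
  exact le_of_mul_le_mul_right (by rwa [zero_mul]) scale_pos

theorem conj_allen_of_conj_charTable (hS : IsFourier S)
    (h : ∀ l, conj (charTable S l i) = charTable S l i') (l : Fin r) :
    conj (allen S l i) = allen S l i' := by
  have pos := hS.allen_row_zero_pos i
  have pos' := hS.allen_row_zero_pos i'
  have conj_row_zero : conj (allen S 0 i) = allen S 0 i := pos.le.isSelfAdjoint
  have row_zero_eq : allen S 0 i = allen S 0 i' := by
    have sq_eq : allen S 0 i * allen S 0 i = allen S 0 i' * allen S 0 i' := by
      simpa only [charTable, map_mul, conj_row_zero] using h 0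
    refine (mul_self_eq_mul_self_iff.1 sq_eq).resolve_right fun neg ↦ ?_
    exact (neg_neg_of_pos pos').not_gt (neg ▸ pos)
  refine mul_right_cancel₀ pos'.ne' ?_
  simpa only [charTable, map_mul, conj_row_zero, ← row_zero_eq] using h l

theorem Nstruct_zero_eq_one (hS : IsFourier S) (h : ∀ l, conj (allen S l i) = allen S l i') :
    Nstruct S i i' 0 = 1 := by
  have conj_col (l : Fin r) : S l i' = conj (S l i) := by
    rw [← hS.allen_mul_col_zero l i', ← h, ← hS.allen_mul_col_zero l i, map_mul, hS.conj_col_zero]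
  calc Nstruct S i i' 0 = ∑ l, ((‖S l i‖ ^ 2 : ℝ) : ℂ) := by
        refine Finset.sum_congr rfl fun l _ ↦ ?_
        rw [hS.conj_col_zero, mul_div_cancel_right₀ _ (hS.col_zero_pos l).ne', conj_col,
          Complex.mul_conj', Complex.ofReal_pow]
    _ = 1 := by rw [← Complex.ofReal_sum, sum_norm_sq_col hS.mem_unitaryGroup, Complex.ofReal_one]

theorem Nstruct_eq_single_zero (hS : IsFourier S) (hi : allen S 0 i = 1)
    (h : ∀ l, conj (allen S l i) = allen S l i') (hN : ∀ k, 0 ≤ Nstruct S i i' k) :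
    Nstruct S i i' = Pi.single 0 1 := by
  have N_zero : Nstruct S i i' 0 = 1 := hS.Nstruct_zero_eq_one h
  have total : ∑ k, Nstruct S i i' k * allen S 0 k = 1 := by
    rw [← hS.allen_mul_allen, ← h, hi, map_one, one_mul]
  have rest : ∑ k ∈ Finset.univ.erase 0, Nstruct S i i' k * allen S 0 k = 0 := by
    rwa [← Finset.add_sum_erase _ _ (Finset.mem_univ 0), N_zero, hS.allen_zero, one_mul,
      add_eq_left] at total
  rw [Finset.sum_eq_zero_iff_of_nonneg
    fun k _ ↦ mul_nonneg (hN k) (hS.allen_row_zero_pos k).le] at rest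
  ext k
  obtain rfl | hk := eq_or_ne k 0
  · rw [N_zero, Pi.single_eq_same]
  · have term_zero := rest k (Finset.mem_erase.2 ⟨hk, Finset.mem_univ k⟩)
    rw [Pi.single_eq_of_ne hk]
    exact (mul_eq_zero.1 term_zero).resolve_right (hS.allen_row_zero_pos k).ne'

theorem norm_allen_eq_one (hS : IsFourier S) (hi : allen S 0 i = 1)
    (h : ∀ l, conj (allen S l i) = allen S l i') (hN : ∀ k, 0 ≤ Nstruct S i i' k) (l : Fin r) :
    ‖allen S l i‖ = 1 := by
  have mul_eq_one : allen S l i * conj (allen S l i) = 1 := by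
    rw [h, hS.allen_mul_allen_of_Nstruct_eq_single (hS.Nstruct_eq_single_zero hi h hN),
      hS.allen_zero]
  rw [Complex.mul_conj'] at mul_eq_one
  exact (pow_eq_one_iff_of_nonneg (norm_nonneg _) two_ne_zero).1 (mod_cast mul_eq_one)

theorem sum_norm_sq_Nstruct (hS : IsFourier S) (hi : ∀ l, ‖allen S l i‖ = 1)
    (hj : ∀ l, ‖allen S l j‖ = 1) : ∑ k, ‖Nstruct S i j k‖ ^ 2 = 1 := by
  rw [← sum_norm_sq_mulVec hS.mem_unitaryGroup, hS.mulVec_Nstruct]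
  simpa only [norm_mul, hi, hj, one_mul] using sum_norm_sq_col hS.mem_unitaryGroup 0

theorem exists_Nstruct_eq_single (hS : IsFourier S) (hi : ∀ l, ‖allen S l i‖ = 1)
    (hj : ∀ l, ‖allen S l j‖ = 1) : ∃ k, Nstruct S i j = Pi.single k 1 := by
  choose z hz using hS.structInt i j
  have N_eq : Nstruct S i j = fun k ↦ (z k : ℂ) := funext hz
  have sum_sq : ∑ k, z k ^ 2 = 1 := by
    have norm_sum := hS.sum_norm_sq_Nstruct hi hj
    simp only [N_eq, Complex.norm_intCast, sq_abs] at norm_sum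
    exact_mod_cast norm_sum
  obtain ⟨k, rfl | rfl⟩ := exists_eq_single_of_sum_sq_eq_one sum_sq
  · exact ⟨k, by rw [N_eq]; ext m; simp [Pi.single_apply]⟩
  · have row_zero : allen S 0 i * allen S 0 j = -allen S 0 k := by
      rw [hS.allen_mul_allen, N_eq]
      simp [Pi.single_apply]
    have prod_pos := mul_pos (hS.allen_row_zero_pos i) (hS.allen_row_zero_pos j)
    exact absurd (row_zero ▸ prod_pos) (neg_neg_of_pos (hS.allen_row_zero_pos k)).not_gt

end IsFourier

end Fourier

/-- the degree-one columns of the character table form an abelian group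
under componentwise multiplication. -/
theorem stmt0 {r : ℕ} [NeZero r] (S : Matrix (Fin r) (Fin r) ℂ)
    (hS : IsFourier S)
    (st : Fin r → Fin r) (hinv : ∀ i, st (st i) = i)
    (hconj : ∀ l i, (starRingEnd ℂ) (charTable S l i) = charTable S l (st i))
    (hlam : ∀ i j, 0 ≤ (lam S i (st i) j).re ∧ (lam S i (st i) j).im = 0) :
    ((fun l => charTable S l 0) ∈ Lset S) ∧
    (∀ b ∈ Lset S, ∀ c ∈ Lset S, (fun l => b l * c l) ∈ Lset S) ∧
    (∀ b ∈ Lset S, (fun l => (starRingEnd ℂ) (b l)) ∈ Lset S) ∧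
    (∀ b ∈ Lset S, ∀ l, charTable S l 0 * b l = b l) ∧
    (∀ b ∈ Lset S, ∀ l, b l * (starRingEnd ℂ) (b l) = charTable S l 0) := by
  have dual (i l : Fin r) : starRingEnd ℂ (allen S l i) = allen S l (st i) :=
    hS.conj_allen_of_conj_charTable (hconj · i) l
  have unimodular {i : Fin r} (hi : allen S 0 i = 1) (l : Fin r) : ‖allen S l i‖ = 1 :=
    hS.norm_allen_eq_one hi (dual i) (fun k ↦ hS.lam_nonneg_iff.1 <|
      Complex.nonneg_iff.2 ⟨(hlam i k).1, (hlam i k).2.symm⟩) l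
  have charTable_zero (l : Fin r) : charTable S l 0 = 1 := by
    rw [charTable_eq_allen (hS.allen_zero 0), hS.allen_zero]
  simp only [hS.mem_Lset_iff, charTable_zero]
  refine ⟨⟨0, hS.allen_zero 0, funext fun l ↦ (hS.allen_zero l).symm⟩, ?_, ?_,
    fun _ _ _ ↦ one_mul _, ?_⟩
  · rintro _ ⟨i, hi, rfl⟩ _ ⟨j, hj, rfl⟩
    obtain ⟨k, hk⟩ := hS.exists_Nstruct_eq_single (unimodular hi) (unimodular hj)
    have allen_mul := hS.allen_mul_allen_of_Nstruct_eq_single hk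
    exact ⟨k, by rw [← allen_mul, hi, hj, one_mul], funext allen_mul⟩
  · rintro _ ⟨i, hi, rfl⟩
    exact ⟨st i, by rw [← dual, hi, map_one], funext (dual i)⟩
  · rintro _ ⟨i, hi, rfl⟩ l
    rw [Complex.mul_conj', unimodular hi, Complex.ofReal_one, one_pow]

end

end FourierPaper
end

section
/- Let S be an r×r real Fourier matrix with r even and r > 2, satisfying the integrality hypothesis, and suppose the structure constants satisfy λ_{iij} ≥ 0 for all i, j. Then it is not the case that exactly one index j ∈ {1,…,r−1} has degree k_j ≠ 1 (with k_l = 1 for all other l ∈ {1,…,r−1}). -/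
/-!
Write `d_j = s_{0j}`, so that `k_j = d_j²`. The Verlinde formula
`∑_k N_{ijk} S_{mk} = S_{mi} S_{mj} / S_{m0}` and Parseval give, for the probability weights
`w_m = S_{m0}²`, the identity `∑_m w_m (|s_{mi}|² - 1)² = ∑_k N_{iik}² - 1`, where
`s_{mi} = S_{mi} / S_{m0}`. If `d_i = 1`, all `d_k ≥ 1` and all `N_{iik} ≥ 0`, then
`∑_k N_{iik} d_k = d_i² = 1` makes the right-hand side nonpositive, so `|s_{mi}| = 1` for all `m`.

Suppose now that `d_j` is the only `d_l` different from `1`. It satisfies `d_j² = a + b d_j` with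
integers `a, b ≥ 0`, hence `k_j ≥ 2`, and the previous remark applies to every `i ≠ j`. Comparing
the norms of rows `0` and `j` yields `(r - 1) k_j ≤ (r - 1) + k_j`, that is
`(r - 2) (k_j - 1) ≤ 1`, so `r ≤ 3`.
-/

open Complex Matrix BigOperators

namespace FourierPaper

noncomputable section

theorem two_le_sq_of_sq_eq_add_mul {d : ℝ} {a b : ℤ} (hd : 0 < d) (hd1 : d ≠ 1)
    (ha : 0 ≤ a) (hb : 0 ≤ b) (h : d ^ 2 = a + b * d) : 2 ≤ d ^ 2 := by
  obtain rfl | hb : b = 0 ∨ 1 ≤ b := by lia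
  · have hda : d ^ 2 = a := by simpa using h
    have ha0 : a ≠ 0 := by rintro rfl; simp [hd.ne'] at hda
    have ha1 : a ≠ 1 := by
      rintro rfl
      exact hd1 ((pow_eq_one_iff_of_nonneg hd.le two_ne_zero).1 (by simpa using hda))
    rw [hda]
    exact_mod_cast (by lia : 2 ≤ a)
  · have hbR : (1 : ℝ) ≤ b := mod_cast hb
    obtain rfl | ha : a = 0 ∨ 1 ≤ a := by lia
    · have hdb : d = b := mul_right_cancel₀ hd.ne' (by rw [← sq, h]; simp)
      have hb1 : b ≠ 1 := by rintro rfl; exact hd1 (by simpa using hdb)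
      have hb2 : (2 : ℝ) ≤ b := mod_cast (by lia : 2 ≤ b)
      nlinarith
    · have haR : (1 : ℝ) ≤ a := mod_cast ha
      nlinarith

theorem sum_normSq_mulVec {m n : Type*} [Fintype m] [Fintype n]
    [DecidableEq n] {U : Matrix m n ℂ} (hU : Uᴴ * U = 1) (v : n → ℂ) :
    ∑ i, normSq ((U *ᵥ v) i) = ∑ j, normSq (v j) := by
  have h : star (U *ᵥ v) ⬝ᵥ (U *ᵥ v) = star v ⬝ᵥ v := by
    rw [star_mulVec, ← dotProduct_mulVec, mulVec_mulVec, hU, one_mulVec]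
  simp only [dotProduct, Pi.star_apply, RCLike.star_def, ← normSq_eq_conj_mul_self] at h
  exact_mod_cast h

/-- The dimension `d_j = s_{0j}` of the `j`-th basis element, the square root of the degree `k_j`.
The real part loses nothing, as `s_{0j}` is real for a Fourier matrix. -/
def dim {r : ℕ} [NeZero r] (S : Matrix (Fin r) (Fin r) ℂ) (j : Fin r) : ℝ :=
  (allen S 0 j).re

theorem deg_eq_dim_sq {r : ℕ} [NeZero r] (S : Matrix (Fin r) (Fin r) ℂ) (j : Fin r) :
    deg S j = dim S j ^ 2 := rfl

namespace IsFourier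

open scoped ComplexConjugate

variable {r : ℕ} [NeZero r] {S : Matrix (Fin r) (Fin r) ℂ}

/-- The structure constant `N_{ijk}` as an integer. -/
def fusionCoeff (hS : IsFourier S) (i j k : Fin r) : ℤ :=
  (hS.structInt i j k).choose

theorem Nstruct_eq_fusionCoeff (hS : IsFourier S) (i j k : Fin r) :
    Nstruct S i j k = hS.fusionCoeff i j k :=
  (hS.structInt i j k).choose_spec

theorem ofReal_re_col0 (hS : IsFourier S) (i : Fin r) : ((S i 0).re : ℂ) = S i 0 :=
  Complex.ext rfl (hS.col0_real i).symm

theorem col0_ne_zero (hS : IsFourier S) (i : Fin r) : S i 0 ≠ 0 := fun h =>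
  (hS.col0_pos i).ne' (by rw [h, zero_re])

theorem ofReal_dim (hS : IsFourier S) (j : Fin r) : (dim S j : ℂ) = allen S 0 j := by
  rw [dim, allen, hS.symm 0 j, ← hS.ofReal_re_col0 j, ← hS.ofReal_re_col0 0, ← ofReal_div,
    ofReal_re]

theorem col0_eq_dim_mul (hS : IsFourier S) (j : Fin r) : S j 0 = dim S j * S 0 0 := by
  rw [hS.ofReal_dim, allen, div_mul_cancel₀ _ (hS.col0_ne_zero 0), hS.symm]

theorem dim_pos (hS : IsFourier S) (j : Fin r) : 0 < dim S j := by
  refine pos_of_mul_pos_left ?_ (hS.col0_pos 0).le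
  rw [← re_ofReal_mul, ← hS.col0_eq_dim_mul]
  exact hS.col0_pos j

theorem dim_zero (hS : IsFourier S) : dim S 0 = 1 := by
  rw [dim, allen, div_self (hS.col0_ne_zero 0), one_re]

theorem deg_eq_one_iff_dim_eq_one (hS : IsFourier S) (j : Fin r) : deg S j = 1 ↔ dim S j = 1 := by
  rw [deg_eq_dim_sq, pow_eq_one_iff_of_nonneg (hS.dim_pos j).le two_ne_zero]

theorem normSq_col0 (hS : IsFourier S) (j : Fin r) :
    normSq (S j 0) = deg S j * normSq (S 0 0) := by
  rw [hS.col0_eq_dim_mul, normSq_mul, normSq_ofReal, deg_eq_dim_sq, sq]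

theorem sum_row_mul_conj_row (hS : IsFourier S) (l m : Fin r) :
    ∑ k, S l k * conj (S m k) = if l = m then 1 else 0 :=
  congrFun₂ hS.unitary l m

theorem sum_normSq_row (hS : IsFourier S) (m : Fin r) : ∑ k, normSq (S m k) = 1 := by
  have h := hS.sum_row_mul_conj_row m m
  simp only [mul_conj, if_true] at h
  exact_mod_cast h

theorem sum_normSq_col (hS : IsFourier S) (k : Fin r) : ∑ m, normSq (S m k) = 1 := by
  simpa only [hS.symm k] using hS.sum_normSq_row k

theorem sum_Nstruct_mul (hS : IsFourier S) (i j m : Fin r) :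
    ∑ k, Nstruct S i j k * S m k = S m i * S m j / S m 0 := by
  calc ∑ k, Nstruct S i j k * S m k
      = ∑ l, S l i * S l j / S l 0 * ∑ k, S m k * conj (S l k) := by
        simp only [Nstruct, Finset.sum_mul, Finset.mul_sum]
        rw [Finset.sum_comm]
        exact Finset.sum_congr rfl fun l _ => Finset.sum_congr rfl fun k _ => by ring
    _ = S m i * S m j / S m 0 := by simp [hS.sum_row_mul_conj_row]

theorem sum_fusionCoeff_mul_dim (hS : IsFourier S) (i j : Fin r) :
    ∑ k, (hS.fusionCoeff i j k : ℝ) * dim S k = dim S i * dim S j := by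
  have h := congrArg (· / S 0 0) (hS.sum_Nstruct_mul i j 0)
  simp only [hS.Nstruct_eq_fusionCoeff, Finset.sum_div, mul_div_assoc] at h
  have key : ∑ k, (hS.fusionCoeff i j k : ℂ) * dim S k = dim S i * dim S j := by
    simp only [hS.ofReal_dim, allen]
    rw [h]
    ring
  exact_mod_cast key

theorem sum_fusionCoeff_sq (hS : IsFourier S) (i j : Fin r) :
    ∑ k, (hS.fusionCoeff i j k : ℝ) ^ 2 =
      ∑ m, normSq (S m i) * normSq (S m j) / normSq (S m 0) := by
  have h := sum_normSq_mulVec (mul_eq_one_comm.1 hS.unitary)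
    (Nstruct S i j)
  simp only [mulVec, dotProduct, mul_comm (S _ _) (Nstruct S i j _), hS.sum_Nstruct_mul,
    normSq_div, normSq_mul] at h
  rw [h]
  simp only [hS.Nstruct_eq_fusionCoeff, normSq_intCast, sq]

theorem lam_re_nonneg_iff (hS : IsFourier S) (i j k : Fin r) :
    0 ≤ (lam S i j k).re ↔ 0 ≤ hS.fusionCoeff i j k := by
  have hlam : lam S i j k = ((hS.fusionCoeff i j k * (dim S i * dim S j / dim S k) : ℝ) : ℂ) := by
    simp only [lam, hS.Nstruct_eq_fusionCoeff, ← hS.ofReal_dim]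
    push_cast
    ring
  have hdim : 0 < dim S i * dim S j / dim S k :=
    div_pos (mul_pos (hS.dim_pos i) (hS.dim_pos j)) (hS.dim_pos k)
  rw [hlam, ofReal_re, mul_nonneg_iff_of_pos_right hdim, Int.cast_nonneg_iff]

theorem sum_sq_normSq_sub_div (hS : IsFourier S) (i : Fin r) :
    ∑ m, (normSq (S m i) - normSq (S m 0)) ^ 2 / normSq (S m 0) =
      ∑ k, (hS.fusionCoeff i i k : ℝ) ^ 2 - 1 := by
  have hexpand (m : Fin r) : (normSq (S m i) - normSq (S m 0)) ^ 2 / normSq (S m 0) =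
      normSq (S m i) * normSq (S m i) / normSq (S m 0) - 2 * normSq (S m i) + normSq (S m 0) := by
    have := (normSq_pos.2 (hS.col0_ne_zero m)).ne'
    field_simp
    ring
  simp only [hexpand, Finset.sum_add_distrib, Finset.sum_sub_distrib, ← Finset.mul_sum,
    hS.sum_normSq_col, hS.sum_fusionCoeff_sq]
  ring

theorem normSq_eq_normSq_col0 (hS : IsFourier S) {i : Fin r}
    (h : ∑ k, (hS.fusionCoeff i i k : ℝ) ^ 2 ≤ 1) (m : Fin r) :
    normSq (S m i) = normSq (S m 0) := by
  have hnonneg : ∀ m ∈ Finset.univ,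
      0 ≤ (normSq (S m i) - normSq (S m 0)) ^ 2 / normSq (S m 0) :=
    fun m _ => div_nonneg (sq_nonneg _) (normSq_nonneg _)
  have hsum : ∑ m, (normSq (S m i) - normSq (S m 0)) ^ 2 / normSq (S m 0) = 0 :=
    le_antisymm (by linarith [hS.sum_sq_normSq_sub_div i]) (Finset.sum_nonneg hnonneg)
  have hm := (Finset.sum_eq_zero_iff_of_nonneg hnonneg).1 hsum m (Finset.mem_univ m)
  simpa [sub_eq_zero, hS.col0_ne_zero m] using hm

theorem sum_fusionCoeff_sq_le_one (hS : IsFourier S) {i : Fin r} (hi : dim S i = 1)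
    (hdim : ∀ k, 1 ≤ dim S k) (hN : ∀ k, 0 ≤ hS.fusionCoeff i i k) :
    ∑ k, (hS.fusionCoeff i i k : ℝ) ^ 2 ≤ 1 := by
  have hN' (k : Fin r) : (0 : ℝ) ≤ hS.fusionCoeff i i k := Int.cast_nonneg (hN k)
  have hsum : ∑ k, (hS.fusionCoeff i i k : ℝ) ≤ 1 :=
    calc ∑ k, (hS.fusionCoeff i i k : ℝ)
        ≤ ∑ k, (hS.fusionCoeff i i k : ℝ) * dim S k :=
          Finset.sum_le_sum fun k _ => le_mul_of_one_le_right (hN' k) (hdim k)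
      _ = 1 := by rw [hS.sum_fusionCoeff_mul_dim, hi, one_mul]
  calc ∑ k, (hS.fusionCoeff i i k : ℝ) ^ 2
      ≤ (∑ k, (hS.fusionCoeff i i k : ℝ)) ^ 2 :=
        Finset.sum_sq_le_sq_sum_of_nonneg fun k _ => hN' k
    _ ≤ 1 := pow_le_one₀ (Finset.sum_nonneg fun k _ => hN' k) hsum

theorem two_le_deg_of_forall_ne_dim_eq_one (hS : IsFourier S) {j : Fin r} (hj : dim S j ≠ 1)
    (hdim : ∀ l, l ≠ j → dim S l = 1) (hN : ∀ k, 0 ≤ hS.fusionCoeff j j k) :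
    2 ≤ deg S j := by
  rw [deg_eq_dim_sq]
  refine two_le_sq_of_sq_eq_add_mul (a := ∑ k ∈ Finset.univ.erase j, hS.fusionCoeff j j k)
    (hS.dim_pos j) hj (Finset.sum_nonneg fun k _ => hN k) (hN j) ?_
  rw [sq, ← hS.sum_fusionCoeff_mul_dim, ← Finset.sum_erase_add _ _ (Finset.mem_univ j),
    Int.cast_sum]
  congr 1
  exact Finset.sum_congr rfl fun k hk => by rw [hdim k (Finset.ne_of_mem_erase hk), mul_one]

theorem sub_one_mul_normSq_col0_add (hS : IsFourier S) {j m : Fin r}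
    (h : ∀ i, i ≠ j → normSq (S m i) = normSq (S m 0)) :
    ((r : ℝ) - 1) * normSq (S m 0) + normSq (S m j) = 1 := by
  have hrow := hS.sum_normSq_row m
  rwa [← Finset.sum_erase_add _ _ (Finset.mem_univ j),
    Finset.sum_congr rfl fun i hi => h i (Finset.ne_of_mem_erase hi), Finset.sum_const,
    nsmul_eq_mul, Finset.cast_card_erase_of_mem (Finset.mem_univ j), Finset.card_fin] at hrow

theorem sub_one_mul_deg_le (hS : IsFourier S) {j : Fin r}
    (h : ∀ i, i ≠ j → ∀ m, normSq (S m i) = normSq (S m 0)) :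
    ((r : ℝ) - 1) * deg S j ≤ (r : ℝ) - 1 + deg S j := by
  have hrow0 := hS.sub_one_mul_normSq_col0_add fun i hi => h i hi 0
  have hrowj := hS.sub_one_mul_normSq_col0_add fun i hi => h i hi j
  rw [hS.symm 0 j, hS.normSq_col0 j] at hrow0
  rw [hS.normSq_col0 j] at hrowj
  refine le_of_mul_le_mul_right ?_ (normSq_pos.2 (hS.col0_ne_zero 0))
  linarith [normSq_nonneg (S j j)]

end IsFourier

theorem stmt1_general {r : ℕ} [NeZero r] (S : Matrix (Fin r) (Fin r) ℂ)
    (hS : IsFourier S) (hr : 3 < r) (hlam : ∀ i j, 0 ≤ (lam S i i j).re) :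
    ¬ ∃ j : Fin r, j ≠ 0 ∧ deg S j ≠ 1 ∧ ∀ l : Fin r, l ≠ 0 → l ≠ j → deg S l = 1 := by
  rintro ⟨j, -, hj, hl⟩
  have hN (i k : Fin r) : 0 ≤ hS.fusionCoeff i i k := (hS.lam_re_nonneg_iff i i k).1 (hlam i k)
  have hdim (i : Fin r) (hi : i ≠ j) : dim S i = 1 := by
    rcases eq_or_ne i 0 with rfl | hi0
    · exact hS.dim_zero
    · exact (hS.deg_eq_one_iff_dim_eq_one i).1 (hl i hi0 hi)
  have hdeg : 2 ≤ deg S j :=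
    hS.two_le_deg_of_forall_ne_dim_eq_one (mt (hS.deg_eq_one_iff_dim_eq_one j).2 hj) hdim (hN j)
  have hdim_ge (k : Fin r) : 1 ≤ dim S k := by
    rcases eq_or_ne k j with rfl | hk
    · exact (one_le_sq_iff₀ (hS.dim_pos k).le).1 (one_le_two.trans hdeg)
    · exact (hdim k hk).ge
  have hbound := hS.sub_one_mul_deg_le fun i hi =>
    hS.normSq_eq_normSq_col0 (hS.sum_fusionCoeff_sq_le_one (hdim i hi) hdim_ge (hN i))
  have hr4 : (4 : ℝ) ≤ r := mod_cast hr
  nlinarith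

/-- for a real Fourier matrix of even rank `r > 2` with nonnegative
structure constants `λ_{iij}`, it is not the case that exactly one nontrivial
degree differs from `1`. -/
theorem stmt1 {r : ℕ} [NeZero r] (S : Matrix (Fin r) (Fin r) ℂ)
    (hS : IsFourier S) (hreal : RealMatrix S)
    (hr : 2 < r) (heven : Even r)
    (hint : IntegralityHyp S)
    (hlam : ∀ i j, 0 ≤ (lam S i i j).re ∧ (lam S i i j).im = 0) :
    ¬ ∃ j : Fin r, j ≠ 0 ∧ deg S j ≠ 1 ∧ ∀ l : Fin r, l ≠ 0 → l ≠ j → deg S l = 1 := by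
  have hr3 : 3 < r := by grind
  exact stmt1_general S hS hr3 fun i j => (hlam i j).1

end

end FourierPaper
end

section
/- Let S be an r×r Fourier matrix satisfying the integrality hypothesis. Let t := #{j ∈ {0,…,r−1} : k_j = 1}, suppose t < r, and suppose there is a number k such that k_j = k for every index j with k_j ≠ 1. Then k is a positive integer dividing t. -/
open Complex Matrix BigOperators

namespace FourierPaper

noncomputable section

/-!
Unit row norms give `d i = 1 / |S i 0|²`, so `k j * d j = d 0`; under the integrality hypothesis
each degree is thus a positive integer dividing `d 0`, which is also the sum of all the degrees. If
all degrees other than `1` equal `k`, this sum is `t + (r - t) * k`, and `k` divides both it and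
`(r - t) * k`, hence `t`.
-/

theorem sum_normSq_row_eq_one {m n : Type*} [DecidableEq m] [Fintype n] {A : Matrix m n ℂ}
    (hA : A * Aᴴ = 1) (i : m) : ∑ j, normSq (A i j) = 1 := by
  have hii : ∑ j, A i j * (starRingEnd ℂ) (A i j) = 1 := by
    simpa [Matrix.mul_apply] using congrFun (congrFun hA i) i
  simp only [mul_conj] at hii
  exact_mod_cast hii

theorem dvd_card_filter_eq_one {ι : Type*} {s : Finset ι} {w : ι → ℕ} {m : ℕ}
    (hsum : m ∣ ∑ i ∈ s, w i) (hw : ∀ i ∈ s, w i ≠ 1 → m ∣ w i) :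
    m ∣ Finset.card {i ∈ s | w i = 1} := by
  have hrest : m ∣ ∑ i ∈ s with w i ≠ 1, w i := Finset.dvd_sum fun i hi => by
    rw [Finset.mem_filter] at hi
    exact hw i hi.1 hi.2
  have hones : ∑ i ∈ s with w i = 1, w i = Finset.card {i ∈ s | w i = 1} := by
    rw [Finset.card_eq_sum_ones]
    exact Finset.sum_congr rfl fun i hi => (Finset.mem_filter.mp hi).2
  rw [← Finset.sum_filter_add_sum_filter_not s (fun i => w i = 1), hones] at hsum
  exact (Nat.dvd_add_left hrest).mp hsum

section Degrees

variable {r : ℕ} [NeZero r] {S : Matrix (Fin r) (Fin r) ℂ}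

theorem nrm_eq_inv_normSq {i : Fin r} (hrow : ∑ j, normSq (S i j) = 1) :
    nrm S i = (normSq (S i 0))⁻¹ := by
  simp only [nrm, allen, normSq_div]
  rw [← Finset.sum_div, hrow, one_div]

theorem deg_eq_normSq_allen {j : Fin r} (h₀ : (S 0 0).im = 0) (hj : (S 0 j).im = 0) :
    deg S j = normSq (allen S 0 j) := by
  have him : (allen S 0 j).im = 0 := by simp [allen, div_im, h₀, hj]
  rw [deg, normSq_apply, him, mul_zero, add_zero, sq]

theorem sum_deg_eq_nrm_zero (hreal : ∀ j, (S 0 j).im = 0) : ∑ j, deg S j = nrm S 0 :=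
  Finset.sum_congr rfl fun j _ => deg_eq_normSq_allen (hreal 0) (hreal j)

theorem deg_mul_nrm (hrow : ∀ i, ∑ j, normSq (S i j) = 1) (hreal : ∀ j, (S 0 j).im = 0)
    {j : Fin r} (hsymm : S 0 j = S j 0) (hj : nrm S j ≠ 0) : deg S j * nrm S j = nrm S 0 := by
  -- If `S j 0 = 0`, division by zero makes `nrm S j` vanish.
  have hentry : normSq (S j 0) ≠ 0 := by
    rwa [nrm_eq_inv_normSq (hrow j), ne_eq, inv_eq_zero] at hj
  rw [nrm_eq_inv_normSq (hrow j), nrm_eq_inv_normSq (hrow 0),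
    deg_eq_normSq_allen (hreal 0) (hreal j), allen, normSq_div, hsymm]
  field_simp

theorem IntegralityHyp.exists_nat_deg (hint : IntegralityHyp S)
    (hrow : ∀ i, ∑ j, normSq (S i j) = 1) (hsymm : ∀ j, S 0 j = S j 0)
    (hreal : ∀ j, (S 0 j).im = 0) :
    ∃ K : Fin r → ℕ, ∀ j, deg S j = K j ∧ 0 < K j ∧ K j ∣ ∑ i, K i := by
  obtain ⟨D, hDpos, hD, hdvd⟩ := hint
  choose K hK using hdvd
  have hdeg (j : Fin r) : deg S j = K j := by
    have hDj : (D j : ℝ) ≠ 0 := Nat.cast_ne_zero.mpr (hDpos j).ne'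
    have hmul : deg S j * D j = D 0 := by
      rw [← hD, ← hD, deg_mul_nrm hrow hreal (hsymm j) (by rwa [hD])]
    apply mul_right_cancel₀ hDj
    rw [hmul, hK j, Nat.cast_mul, mul_comm]
  have hsum : ∑ i, K i = D 0 := by
    have hsumReal : ∑ i, (K i : ℝ) = D 0 := by
      simp only [← hdeg]
      rw [sum_deg_eq_nrm_zero hreal, hD]
    exact_mod_cast hsumReal
  refine ⟨K, fun j => ⟨hdeg j, ?_, ?_⟩⟩
  · exact Nat.pos_of_mul_pos_left (hK j ▸ hDpos 0)
  · exact hsum ▸ Dvd.intro_left (D j) (hK j).symm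

theorem stmt4_general (hrow : ∀ i, ∑ j, normSq (S i j) = 1) (hsymm : ∀ j, S 0 j = S j 0)
    (hreal : ∀ j, (S 0 j).im = 0) (hint : IntegralityHyp S)
    (k : ℝ) (hk : ∀ j : Fin r, deg S j ≠ 1 → deg S j = k)
    (ht : {j : Fin r | deg S j = 1}.ncard < r) :
    ∃ m : ℕ, 0 < m ∧ k = (m : ℝ) ∧ m ∣ {j : Fin r | deg S j = 1}.ncard := by
  obtain ⟨K, hK⟩ := hint.exists_nat_deg hrow hsymm hreal
  have hone (i : Fin r) : deg S i = 1 ↔ K i = 1 := by rw [(hK i).1, Nat.cast_eq_one]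
  obtain ⟨j, hj⟩ : ∃ j, deg S j ≠ 1 := by
    by_contra! hall
    simp [hall] at ht
  have hkj : k = K j := (hk j hj).symm.trans (hK j).1
  have hcommon (i : Fin r) (hi : K i ≠ 1) : K i = K j := by
    have hcast : (K i : ℝ) = K j := by rw [← (hK i).1, hk i (mt (hone i).mp hi), hkj]
    exact_mod_cast hcast
  refine ⟨K j, (hK j).2.1, hkj, ?_⟩
  simp only [hone, Set.ncard_eq_toFinset_card', Set.toFinset_ofPred]
  exact dvd_card_filter_eq_one (hK j).2.2 fun i _ hi => (hcommon i hi).symm.dvd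

end Degrees

/-- if `t` is the number of degrees equal to `1`, `t < r`, and all
degrees different from `1` are equal to a common value `k`, then `k` is a
positive integer dividing `t`. -/
theorem stmt4 {r : ℕ} [NeZero r] (S : Matrix (Fin r) (Fin r) ℂ)
    (hS : IsFourier S) (hint : IntegralityHyp S)
    (k : ℝ) (hk : ∀ j : Fin r, deg S j ≠ 1 → deg S j = k)
    (ht : {j : Fin r | deg S j = 1}.ncard < r) :
    ∃ m : ℕ, 0 < m ∧ k = (m : ℝ) ∧ m ∣ {j : Fin r | deg S j = 1}.ncard := by
  exact stmt4_general (sum_normSq_row_eq_one hS.unitary) (hS.symm 0)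
    (fun j => hS.symm j 0 ▸ hS.col0_real j) hint k hk ht

end

end FourierPaper
end

section
/- If k₁, k₂, k₃ are positive integers, each of which is a perfect square, and each kᵢ divides 1 + k₁ + k₂ + k₃, then k₁ = k₂ = k₃ = 1. -/
/-! Squares are `0` or `1` modulo `4`. Put `N = 1 + k₁ + k₂ + k₃`. If `4` divided some `kᵢ`,
it would divide `N`; but at most two of the `kᵢ` would then be `1` modulo `4`, and `N` would
be `1`, `2` or `3` modulo `4`. Hence every `kᵢ` is `1` modulo `4`, so `4` divides `N` and,
by coprimality, `4 * kᵢ` divides `N`. Adding up the inequalities `4 * kᵢ ≤ N` gives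
`k₁ + k₂ + k₃ ≤ 3`. The argument works for any number of `kᵢ` if `4` is replaced by that
number plus one. -/

open Finset

theorem four_dvd_or_modEq_one_of_isSquare {n : ℕ} (h : IsSquare n) : 4 ∣ n ∨ n ≡ 1 [MOD 4] := by
  obtain ⟨a, rfl⟩ := h
  rcases a.even_or_odd with ⟨b, rfl⟩ | ⟨b, rfl⟩
  · exact .inl ⟨b * b, by ring⟩
  · refine .inr (Nat.ModEq.symm ?_)
    rw [Nat.modEq_iff_dvd]
    exact ⟨b * b + b, by push_cast; ring⟩

section Family

variable {ι : Type*}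

theorem sum_modEq_card_filter_modEq_one {m : ℕ} {k : ι → ℕ} (s : Finset ι)
    (hk : ∀ i ∈ s, m ∣ k i ∨ k i ≡ 1 [MOD m]) :
    ∑ i ∈ s, k i ≡ #{i ∈ s | k i ≡ 1 [MOD m]} [MOD m] := by
  rw [card_filter]
  refine Nat.ModEq.sum fun i hi ↦ ?_
  split_ifs with h
  · exact h
  · exact Nat.modEq_zero_iff_dvd.2 ((hk i hi).resolve_right h)

variable [Fintype ι] {k : ι → ℕ}

theorem modEq_one_of_dvd_one_add_sum
    (hk : ∀ i, Fintype.card ι + 1 ∣ k i ∨ k i ≡ 1 [MOD Fintype.card ι + 1])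
    (hd : ∀ i, k i ∣ 1 + ∑ j, k j) (i : ι) : k i ≡ 1 [MOD Fintype.card ι + 1] := by
  by_contra hi
  have hdvd : Fintype.card ι + 1 ∣ 1 + ∑ j, k j := ((hk i).resolve_right hi).trans (hd i)
  have hsum := (sum_modEq_card_filter_modEq_one univ fun j _ ↦ hk j).add_left 1
  have hlt : #{j | k j ≡ 1 [MOD Fintype.card ι + 1]} < Fintype.card ι :=
    card_lt_univ_of_notMem (x := i) (by simpa using hi)
  have hle := Nat.le_of_dvd (by lia) ((hsum.dvd_iff dvd_rfl).1 hdvd)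
  lia

theorem card_add_one_dvd_one_add_sum (hk : ∀ i, k i ≡ 1 [MOD Fintype.card ι + 1]) :
    Fintype.card ι + 1 ∣ 1 + ∑ i, k i := by
  have hsum : ∑ i, k i ≡ ∑ _i : ι, 1 [MOD Fintype.card ι + 1] := Nat.ModEq.sum fun i _ ↦ hk i
  refine ((hsum.add_left 1).dvd_iff dvd_rfl).2 ?_
  simp [add_comm]

theorem eq_one_of_card_add_one_mul_le (hpos : ∀ i, 1 ≤ k i)
    (hle : ∀ i, (Fintype.card ι + 1) * k i ≤ 1 + ∑ j, k j) (i : ι) : k i = 1 := by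
  have hadd : (Fintype.card ι + 1) * ∑ i, k i ≤ Fintype.card ι * (1 + ∑ j, k j) :=
    calc (Fintype.card ι + 1) * ∑ i, k i
      _ = ∑ i, (Fintype.card ι + 1) * k i := mul_sum ..
      _ ≤ Fintype.card ι * (1 + ∑ j, k j) := sum_le_card_nsmul univ _ _ fun i _ ↦ hle i
  have hsum : ∑ i, k i ≤ ∑ _i : ι, 1 := by
    rw [sum_const, card_univ, smul_eq_mul]
    linarith
  have heq := (sum_eq_sum_iff_of_le fun i _ ↦ hpos i).1
    ((sum_le_sum fun i _ ↦ hpos i).antisymm hsum)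
  exact (heq i (mem_univ i)).symm

end Family

theorem stmt8_general {ι : Type*} [Fintype ι] {k : ι → ℕ}
    (hk : ∀ i, Fintype.card ι + 1 ∣ k i ∨ k i ≡ 1 [MOD Fintype.card ι + 1])
    (hd : ∀ i, k i ∣ 1 + ∑ j, k j) (i : ι) : k i = 1 := by
  have hone := modEq_one_of_dvd_one_add_sum hk hd
  have hN : 0 < 1 + ∑ j, k j := by lia
  refine eq_one_of_card_add_one_mul_le (fun j ↦ Nat.pos_of_dvd_of_pos (hd j) hN) (fun j ↦ ?_) i
  have hcop : (Fintype.card ι + 1).Coprime (k j) := by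
    rw [Nat.coprime_comm, Nat.Coprime, (hone j).gcd_eq, Nat.gcd_one_left]
  exact Nat.le_of_dvd hN (hcop.mul_dvd_of_dvd_of_dvd (card_add_one_dvd_one_add_sum hone) (hd j))

/-- if `k₁, k₂, k₃` are positive perfect squares each dividing
`1 + k₁ + k₂ + k₃`, then `k₁ = k₂ = k₃ = 1`. -/
theorem stmt8 (k₁ k₂ k₃ : ℕ) (h₁ : 0 < k₁) (h₂ : 0 < k₂) (h₃ : 0 < k₃)
    (hs₁ : IsSquare k₁) (hs₂ : IsSquare k₂) (hs₃ : IsSquare k₃)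
    (hd₁ : k₁ ∣ 1 + k₁ + k₂ + k₃) (hd₂ : k₂ ∣ 1 + k₁ + k₂ + k₃)
    (hd₃ : k₃ ∣ 1 + k₁ + k₂ + k₃) :
    k₁ = 1 ∧ k₂ = 1 ∧ k₃ = 1 := by
  simpa [Fin.forall_fin_succ] using stmt8_general (k := ![k₁, k₂, k₃])
    (by simp [Fin.forall_fin_succ, four_dvd_or_modEq_one_of_isSquare, hs₁, hs₂, hs₃])
    (by simp [Fin.forall_fin_succ, Fin.sum_univ_three, ← add_assoc, hd₁, hd₂, hd₃])
end
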